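/- For each n ≥ 2 let u_n and v_n be orthonormal vectors in ℝⁿ, and let s_n be uniformly distributed on the hemisphere {s ∈ S^{n-1} : ⟨s, u_n⟩ ≥ 0}. Then the pair of random variables (√n·⟨s_n, u_n⟩, √n·⟨s_n, v_n⟩) converges in distribution, as n → ∞, to (|N₁|, N₂), where N₁ and N₂ are independent standard normal random variables. -/

import Mathlib

open MeasureTheory ProbabilityTheory Filter
open scoped Topology RealInnerProductSpace

noncomputable section

/-- `μ` is the uniform (rotation-invariant) probability distribution on the sphere of
radius `r` centered at the origin of `ℝⁿ`. -/
def IsUniformSphere (n : ℕ) (r : ℝ) (μ : Measure (EuclideanSpace ℝ (Fin n))) : Prop :=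
  IsProbabilityMeasure μ ∧
  μ (Metric.sphere (0 : EuclideanSpace ℝ (Fin n)) r)ᶜ = 0 ∧
  ∀ T : EuclideanSpace ℝ (Fin n) ≃ₗᵢ[ℝ] EuclideanSpace ℝ (Fin n), μ.map T = μ

/-- `μ` is the uniform distribution on the hemisphere `{x ∈ ℝⁿ : ‖x‖ = r, ⟨x, u⟩ ≥ 0}`:
the uniform measure on the sphere of radius `r` conditioned on `⟨x, u⟩ ≥ 0`. -/
def IsUniformHemisphere (n : ℕ) (r : ℝ) (u : EuclideanSpace ℝ (Fin n))
    (μ : Measure (EuclideanSpace ℝ (Fin n))) : Prop :=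
  ∃ ν : Measure (EuclideanSpace ℝ (Fin n)),
    IsUniformSphere n r ν ∧ μ = ν[|{x | 0 ≤ ⟪x, u⟫}]

lemma integral_sq_gaussianReal : ∫ x, x ^ 2 ∂(gaussianReal 0 1) = 1 := by
  have h := variance_fun_id_gaussianReal (μ := 0) (v := 1)
  rw [variance_eq_integral (by fun_prop)] at h
  simpa using h

lemma memLp_sq_gaussianReal : MemLp (fun x : ℝ => x ^ 2) 2 (gaussianReal 0 1) := by
  rw [memLp_two_iff_integrable_sq (by fun_prop)]
  have h := (memLp_id_gaussianReal (μ := 0) (v := 1) 4).integrable_norm_pow (p := 4) (by simp)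
  refine h.congr (ae_of_all _ fun x => ?_)
  simp [← pow_mul, Even.pow_abs (show Even 4 by decide)]

section
variable {E : Type*} [NormedAddCommGroup E] [InnerProductSpace ℝ E] [FiniteDimensional ℝ E]
  [MeasurableSpace E] [BorelSpace E]

lemma charFun_eq_of_norm_eq {ν : Measure E} (hν : ∀ T : E ≃ₗᵢ[ℝ] E, ν.map T = ν) {x y : E}
    (h : ‖x‖ = ‖y‖) : charFun ν x = charFun ν y := by
  have hT := Submodule.reflection_sub h
  set T := Submodule.reflection (ℝ ∙ (x - y))ᗮ
  rw [← hT]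
  conv_rhs => rw [← hν T, charFun_apply, integral_map (by fun_prop) (by fun_prop)]
  simp_rw [LinearIsometryEquiv.inner_map_map, charFun_apply]

/-- A rotation-invariant random unit vector, scaled by the norm of an independent standard Gaussian
vector, is itself standard Gaussian. -/
lemma map_norm_smul_prod_stdGaussian {ν : Measure E} [IsProbabilityMeasure ν]
    (hν : ∀ T : E ≃ₗᵢ[ℝ] E, ν.map T = ν) (hs : ∀ᵐ s ∂ν, ‖s‖ = 1) :
    (ν.prod (stdGaussian E)).map (fun p => ‖p.2‖ • p.1) = stdGaussian E := by
  have hm : Measurable (fun p : E × E => ‖p.2‖ • p.1) := by fun_prop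
  have := Measure.isProbabilityMeasure_map (μ := ν.prod (stdGaussian E)) hm.aemeasurable
  refine Measure.ext_of_charFun (funext fun t => ?_)
  have hf_int (F : E × E → ℝ) (hF : Continuous F) :
      Integrable (fun p => Complex.exp (F p * Complex.I)) (ν.prod (stdGaussian E)) :=
    Integrable.of_bound (C := 1) (by fun_prop) (by simp [Complex.norm_exp_ofReal_mul_I])
  calc charFun ((ν.prod (stdGaussian E)).map (fun p => ‖p.2‖ • p.1)) t
      = ∫ p, Complex.exp (⟪‖p.2‖ • p.1, t⟫ * Complex.I) ∂(ν.prod (stdGaussian E)) := by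
        rw [charFun_apply, integral_map (by fun_prop) (by fun_prop)]
    _ = ∫ g, charFun ν (‖g‖ • t) ∂(stdGaussian E) := by
        rw [integral_prod_symm _ (hf_int _ (by fun_prop))]
        simp_rw [charFun_apply, inner_smul_left, inner_smul_right]
        rfl
    _ = ∫ g, charFun ν (‖t‖ • g) ∂(stdGaussian E) := by
        congr with g
        exact charFun_eq_of_norm_eq hν (by simp [norm_smul, mul_comm])
    _ = ∫ p, Complex.exp (⟪p.1, ‖t‖ • p.2⟫ * Complex.I) ∂(ν.prod (stdGaussian E)) := by
        rw [integral_prod_symm _ (hf_int _ (by fun_prop))]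
        simp_rw [charFun_apply]
    _ = ∫ s, charFun (stdGaussian E) (‖t‖ • s) ∂ν := by
        rw [integral_prod _ (hf_int _ (by fun_prop))]
        simp_rw [charFun_apply, inner_smul_right, real_inner_comm]
    _ = ∫ s, charFun (stdGaussian E) t ∂ν := by
        refine integral_congr_ae (hs.mono fun s hs => ?_)
        simp [charFun_stdGaussian, norm_smul, hs]
    _ = charFun (stdGaussian E) t := by simp

lemma map_inner_inner_stdGaussian {u v : E} (hu : ‖u‖ = 1) (hv : ‖v‖ = 1) (huv : ⟪u, v⟫ = 0) :
    (stdGaussian E).map (fun x => (⟪x, u⟫, ⟪x, v⟫)) = (gaussianReal 0 1).prod (gaussianReal 0 1) := by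
  have := Measure.isProbabilityMeasure_map (μ := stdGaussian E)
    (f := fun x => (⟪x, u⟫, ⟪x, v⟫)) (by fun_prop)
  refine Measure.ext_of_charFunDual (funext fun L => ?_)
  have hL (a b : ℝ) : L (a, b) = a * L (1, 0) + b * L (0, 1) := by
    rw [← smul_eq_mul, ← smul_eq_mul, ← map_smul, ← map_smul, ← map_add]; simp
  set c := L (1, 0)
  set d := L (0, 1)
  have hn : ‖c • u + d • v‖ ^ 2 = c ^ 2 + d ^ 2 := by
    rw [norm_add_sq_real, norm_smul, norm_smul, inner_smul_left, inner_smul_right, huv, hu, hv]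
    simp
  calc charFunDual ((stdGaussian E).map (fun x => (⟪x, u⟫, ⟪x, v⟫))) L
      = charFun (stdGaussian E) (c • u + d • v) := by
        rw [charFunDual_apply, integral_map (by fun_prop) (by fun_prop), charFun_apply]
        simp_rw [hL, inner_add_right, inner_smul_right, mul_comm]
    _ = charFunDual ((gaussianReal 0 1).prod (gaussianReal 0 1)) L := by
        have h1 : charFunDual (gaussianReal 0 1) (L.comp (.inl ℝ ℝ ℝ)) =
            charFun (gaussianReal 0 1) c := by
          rw [charFunDual_apply, charFun_apply_real]
          simp [hL, mul_comm]
        have h2 : charFunDual (gaussianReal 0 1) (L.comp (.inr ℝ ℝ ℝ)) =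
            charFun (gaussianReal 0 1) d := by
          rw [charFunDual_apply, charFun_apply_real]
          simp [hL, mul_comm]
        rw [charFunDual_prod, h1, h2, charFun_stdGaussian, ← Complex.ofReal_pow, hn,
          charFun_gaussianReal, charFun_gaussianReal, ← Complex.exp_add]
        congr 1
        push_cast
        ring

lemma map_norm_mul_inner_inner_prod_stdGaussian {ν : Measure E} [IsProbabilityMeasure ν]
    (hν : ∀ T : E ≃ₗᵢ[ℝ] E, ν.map T = ν) (hs : ∀ᵐ s ∂ν, ‖s‖ = 1)
    {u v : E} (hu : ‖u‖ = 1) (hv : ‖v‖ = 1) (huv : ⟪u, v⟫ = 0) :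
    (ν.prod (stdGaussian E)).map (fun p => (‖p.2‖ * ⟪p.1, u⟫, ‖p.2‖ * ⟪p.1, v⟫)) =
      (gaussianReal 0 1).prod (gaussianReal 0 1) := by
  rw [← map_inner_inner_stdGaussian hu hv huv]
  conv_rhs => rw [← map_norm_smul_prod_stdGaussian hν hs,
    Measure.map_map (by fun_prop) (by fun_prop)]
  simp only [Function.comp_def, real_inner_smul_left]

lemma map_norm_mul_inner_prod_stdGaussian {ν : Measure E} [IsProbabilityMeasure ν]
    (hν : ∀ T : E ≃ₗᵢ[ℝ] E, ν.map T = ν) (hs : ∀ᵐ s ∂ν, ‖s‖ = 1) {u : E} (hu : ‖u‖ = 1) :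
    (ν.prod (stdGaussian E)).map (fun p => ‖p.2‖ * ⟪p.1, u⟫) = gaussianReal 0 1 := by
  have h : (stdGaussian E).map (fun x => ⟪x, u⟫) = gaussianReal 0 1 := by
    have := Measure.isProbabilityMeasure_map (μ := stdGaussian E)
      (f := fun x => ⟪x, u⟫) (by fun_prop)
    refine Measure.ext_of_charFun (funext fun t => ?_)
    rw [charFun_apply_real, integral_map (by fun_prop) (by fun_prop)]
    have := charFun_stdGaussian (t • u)
    simp only [charFun_apply, inner_smul_right, norm_smul, hu, Complex.ofReal_mul] at this
    rw [this, charFun_gaussianReal]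
    congr 1
    simp [← Complex.ofReal_pow, neg_div]
  rw [← h]
  conv_rhs => rw [← map_norm_smul_prod_stdGaussian hν hs, Measure.map_map (by fun_prop) (by fun_prop)]
  congr with p
  simp [inner_smul_left]

lemma integral_inner_sq_mul_integral_norm_sq {ν : Measure E} [IsProbabilityMeasure ν]
    (hν : ∀ T : E ≃ₗᵢ[ℝ] E, ν.map T = ν) (hs : ∀ᵐ s ∂ν, ‖s‖ = 1) {u : E} (hu : ‖u‖ = 1) :
    (∫ s, ⟪s, u⟫ ^ 2 ∂ν) * ∫ g, ‖g‖ ^ 2 ∂(stdGaussian E) = 1 := by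
  rw [← integral_prod_mul, ← integral_sq_gaussianReal, ← map_norm_mul_inner_prod_stdGaussian hν hs hu,
    integral_map (by fun_prop) (by fun_prop)]
  simp_rw [mul_pow, mul_comm]

lemma ae_inner_ne_zero {ν : Measure E} [IsProbabilityMeasure ν]
    (hν : ∀ T : E ≃ₗᵢ[ℝ] E, ν.map T = ν) (hs : ∀ᵐ s ∂ν, ‖s‖ = 1) {u : E} (hu : ‖u‖ = 1) :
    ∀ᵐ s ∂ν, ⟪s, u⟫ ≠ 0 := by
  have h0 : ∀ᵐ x ∂(gaussianReal 0 1), x ≠ 0 := by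
    have := nullSingletonClass_gaussianReal (μ := 0) (v := 1) one_ne_zero
    exact Measure.ae_ne _ 0
  rw [← map_norm_mul_inner_prod_stdGaussian hν hs hu] at h0
  filter_upwards [Measure.ae_ae_of_ae_prod (ae_of_ae_map (by fun_prop) h0)] with s hs h
  obtain ⟨g, hg⟩ := hs.exists
  exact hg (by rw [h, mul_zero])

/-- The integral of a reflection-invariant function over a hemisphere is half the full integral. -/
lemma setIntegral_inner_nonneg {ν : Measure E} {u : E} (h0 : ∀ᵐ s ∂ν, ⟪s, u⟫ ≠ 0)
    {T : E ≃ₗᵢ[ℝ] E} (hT : ν.map T = ν) (hTu : T u = -u) {F : E → ℝ} (hF : Integrable F ν)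
    (hFT : ∀ s, F (T s) = F s) :
    2 * ∫ s in {s | 0 ≤ ⟪s, u⟫}, F s ∂ν = ∫ s, F s ∂ν := by
  have hS : MeasurableSet {s : E | 0 ≤ ⟪s, u⟫} := measurableSet_le (by fun_prop) (by fun_prop)
  rw [← integral_add_compl hS hF, two_mul, add_right_inj]
  conv_rhs => rw [← hT]
  rw [T.toHomeomorph.isClosedEmbedding.measurableEmbedding.setIntegral_map (f := T)]
  simp_rw [hFT]
  refine setIntegral_congr_set (h0.mono fun s hs => propext ?_)
  have hneg : ⟪T s, u⟫ = -⟪s, u⟫ := by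
    rw [← T.inner_map_map s u, hTu, inner_neg_right, neg_neg]
  change 0 ≤ ⟪s, u⟫ ↔ ¬ 0 ≤ ⟪T s, u⟫
  rw [hneg, not_le, neg_lt_zero]
  exact ⟨fun h => h.lt_of_ne' hs, le_of_lt⟩
end

lemma integral_norm_sq_stdGaussian (n : ℕ) :
    ∫ g, ‖g‖ ^ 2 ∂(stdGaussian (EuclideanSpace ℝ (Fin n))) = n := by
  rw [← map_pi_eq_stdGaussian, integral_map (by fun_prop) (by fun_prop)]
  simp_rw [EuclideanSpace.real_norm_sq_eq]
  rw [integral_finsetSum]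
  · have (i : Fin n) : ∫ x : Fin n → ℝ, x i ^ 2 ∂(Measure.pi fun _ => gaussianReal 0 1) = 1 :=
      (integral_comp_eval (μ := fun _ : Fin n => gaussianReal 0 1) (i := i)
        (f := fun x : ℝ => x ^ 2) (by fun_prop)).trans integral_sq_gaussianReal
    simp [this]
  · exact fun i _ => integrable_comp_eval (μ := fun _ : Fin n => gaussianReal 0 1) (i := i)
      (f := fun x : ℝ => x ^ 2) (memLp_sq_gaussianReal.integrable one_le_two)

lemma integral_sq_norm_sq_sub_stdGaussian (n : ℕ) :
    ∫ g, (‖g‖ ^ 2 - n) ^ 2 ∂(stdGaussian (EuclideanSpace ℝ (Fin n))) =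
      n * Var[fun x => x ^ 2; gaussianReal 0 1] := by
  have h := variance_sum_pi (ι := Fin n) (fun _ => memLp_sq_gaussianReal)
  rw [variance_eq_integral (by fun_prop)] at h
  have hn := integral_norm_sq_stdGaussian n
  rw [← map_pi_eq_stdGaussian, integral_map (by fun_prop) (by fun_prop)] at hn ⊢
  simp only [EuclideanSpace.real_norm_sq_eq] at hn ⊢
  simpa [hn] using h

lemma integrable_sq_norm_sq_sub_stdGaussian (n : ℕ) :
    Integrable (fun g => (‖g‖ ^ 2 - n) ^ 2) (stdGaussian (EuclideanSpace ℝ (Fin n))) := by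
  have h (k : ℕ) : Integrable (fun g => ‖g‖ ^ k) (stdGaussian (EuclideanSpace ℝ (Fin n))) := by
    simpa using (IsGaussian.memLp_id (stdGaussian (EuclideanSpace ℝ (Fin n))) k
      (by simp)).integrable_norm_pow'
  refine (((h 4).sub ((h 2).const_mul (2 * n : ℝ))).add
    (integrable_const ((n : ℝ) ^ 2))).congr (ae_of_all _ fun g => ?_)
  simp only [Pi.add_apply, Pi.sub_apply]
  ring

lemma dist_sqrt_mul_norm_mul_le {n r a b : ℝ} (hn : 0 < n) (hr : 0 ≤ r) :
    dist (√n * a, √n * b) (r * a, r * b) ≤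
      (r ^ 2 - n) ^ 2 / (n * √n) + √n / 2 * (a ^ 2 + b ^ 2) := by
  have hs : 0 < √n := Real.sqrt_pos.2 hn
  have hsq : √n ^ 2 = n := Real.sq_sqrt hn.le
  have hle : (√n - r) ^ 2 ≤ (r ^ 2 - n) ^ 2 / n := by
    rw [le_div_iff₀ hn]
    calc (√n - r) ^ 2 * n = (√n - r) ^ 2 * √n ^ 2 := by rw [hsq]
      _ ≤ (√n - r) ^ 2 * (√n + r) ^ 2 := by gcongr; linarith
      _ = (r ^ 2 - √n ^ 2) ^ 2 := by ring
      _ = (r ^ 2 - n) ^ 2 := by rw [hsq]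
  have key (c : ℝ) : dist (√n * c) (r * c) ≤ (r ^ 2 - n) ^ 2 / (n * √n) / 2 + √n / 2 * c ^ 2 := by
    rw [Real.dist_eq, ← sub_mul, abs_mul]
    have h1 : (√n - r) ^ 2 / √n ≤ (r ^ 2 - n) ^ 2 / (n * √n) := by
      rw [← div_div]; gcongr
    have h2 : |√n - r| * |c| ≤ (√n - r) ^ 2 / √n / 2 + √n / 2 * c ^ 2 := by
      rw [← sq_abs (√n - r), ← sq_abs c]
      have : 0 ≤ (|√n - r| - √n * |c|) ^ 2 / √n / 2 := by positivity
      have e : (|√n - r| - √n * |c|) ^ 2 / √n / 2 =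
          |√n - r| ^ 2 / √n / 2 + √n / 2 * |c| ^ 2 - |√n - r| * |c| := by
        field_simp; ring
      linarith
    linarith
  rw [Prod.dist_eq, max_le_iff]
  have ha := key a
  have hb := key b
  have : 0 ≤ (r ^ 2 - n) ^ 2 / (n * √n) := by positivity
  have : 0 ≤ √n / 2 * a ^ 2 := by positivity
  have : 0 ≤ √n / 2 * b ^ 2 := by positivity
  constructor <;> simp only <;> linarith

/-- Quantitative Gaussian approximation of two coordinates of a uniform point on the sphere of radius
`√n`, tested against a bounded Lipschitz function. -/
lemma abs_integral_sphere_sub_integral_gaussian_le {n : ℕ} (hn : 0 < n)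
    {ν : Measure (EuclideanSpace ℝ (Fin n))} [IsProbabilityMeasure ν]
    (hν : ∀ T : EuclideanSpace ℝ (Fin n) ≃ₗᵢ[ℝ] EuclideanSpace ℝ (Fin n), ν.map T = ν)
    (hs : ∀ᵐ s ∂ν, ‖s‖ = 1) {u v : EuclideanSpace ℝ (Fin n)}
    (hu : ‖u‖ = 1) (hv : ‖v‖ = 1) (huv : ⟪u, v⟫ = 0) {f : ℝ × ℝ → ℝ} {M : ℝ}
    (hM : ∀ x y, dist (f x) (f y) ≤ M) {L : NNReal} (hL : LipschitzWith L f) :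
    |∫ s, f (√n * ⟪s, u⟫, √n * ⟪s, v⟫) ∂ν - ∫ p, f p ∂((gaussianReal 0 1).prod (gaussianReal 0 1))|
      ≤ L * ((Var[fun x => x ^ 2; gaussianReal 0 1] + 1) / √n) := by
  set γ := stdGaussian (EuclideanSpace ℝ (Fin n)) with hγ
  have hn' : (0 : ℝ) < n := by exact_mod_cast hn
  have hf := hL.continuous
  have hf_int {g : EuclideanSpace ℝ (Fin n) × EuclideanSpace ℝ (Fin n) → ℝ × ℝ} (hg : Continuous g) :
      Integrable (fun p => f (g p)) (ν.prod γ) := by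
    refine Integrable.of_bound (C := ‖f 0‖ + M) (by fun_prop) (ae_of_all _ fun p => ?_)
    have := hM (g p) 0
    rw [dist_eq_norm] at this
    linarith [norm_le_norm_add_norm_sub' (f (g p)) (f 0)]
  have hsq {w : EuclideanSpace ℝ (Fin n)} (hw : ‖w‖ = 1) : Integrable (fun s => ⟪s, w⟫ ^ 2) ν := by
    refine Integrable.of_bound (C := 1) (by fun_prop) (hs.mono fun s hs => ?_)
    have := abs_real_inner_le_norm s w
    rw [hs, hw, one_mul] at this
    simpa [abs_le] using this
  have hsqint {w : EuclideanSpace ℝ (Fin n)} (hw : ‖w‖ = 1) : ∫ s, ⟪s, w⟫ ^ 2 ∂ν = 1 / n := by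
    have := integral_inner_sq_mul_integral_norm_sq hν hs hw
    rwa [integral_norm_sq_stdGaussian, ← eq_div_iff hn'.ne'] at this
  have hD1 : Integrable (fun p => (‖p.2‖ ^ 2 - n) ^ 2 / (n * √n)) (ν.prod γ) :=
    ((integrable_sq_norm_sq_sub_stdGaussian n).div_const _).comp_snd ν
  have hD2 : Integrable (fun p => √n / 2 * (⟪p.1, u⟫ ^ 2 + ⟪p.1, v⟫ ^ 2)) (ν.prod γ) :=
    (((hsq hu).add (hsq hv)).const_mul (√n / 2)).comp_fst γ
  have hW : ∫ s, f (√n * ⟪s, u⟫, √n * ⟪s, v⟫) ∂ν =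
      ∫ p, f (√n * ⟪p.1, u⟫, √n * ⟪p.1, v⟫) ∂(ν.prod γ) := by
    rw [integral_fun_fst (fun s => f (√n * ⟪s, u⟫, √n * ⟪s, v⟫))]
    simp
  rw [hW, ← map_norm_mul_inner_inner_prod_stdGaussian hν hs hu hv huv,
    integral_map (by fun_prop) (by fun_prop), ← integral_sub (hf_int (by fun_prop))
      (hf_int (by fun_prop))]
  calc _ ≤ ∫ p, |f (√n * ⟪p.1, u⟫, √n * ⟪p.1, v⟫) -
          f (‖p.2‖ * ⟪p.1, u⟫, ‖p.2‖ * ⟪p.1, v⟫)| ∂(ν.prod γ) := abs_integral_le_integral_abs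
    _ ≤ ∫ p, L * ((‖p.2‖ ^ 2 - n) ^ 2 / (n * √n) +
          √n / 2 * (⟪p.1, u⟫ ^ 2 + ⟪p.1, v⟫ ^ 2)) ∂(ν.prod γ) := by
        refine integral_mono ((hf_int (by fun_prop)).sub (hf_int (by fun_prop))).abs
          ((hD1.add hD2).const_mul _) fun p => ?_
        exact (hL.dist_le_mul _ _).trans (by
          gcongr
          exact dist_sqrt_mul_norm_mul_le hn' (norm_nonneg _))
    _ = L * ((Var[fun x => x ^ 2; gaussianReal 0 1] + 1) / √n) := by
        rw [integral_const_mul, integral_add hD1 hD2,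
          integral_fun_snd (fun g : EuclideanSpace ℝ (Fin n) => (‖g‖ ^ 2 - n) ^ 2 / (n * √n)),
          integral_fun_fst (fun s => √n / 2 * (⟪s, u⟫ ^ 2 + ⟪s, v⟫ ^ 2)),
          integral_div, integral_const_mul, integral_add (hsq hu) (hsq hv), hsqint hu, hsqint hv,
          hγ, integral_sq_norm_sq_sub_stdGaussian]
        have hne : √(n : ℝ) ≠ 0 := (Real.sqrt_pos.2 hn').ne'
        have : √(n : ℝ) ^ 2 = n := Real.sq_sqrt hn'.le
        simp only [probReal_univ, one_smul]
        field_simp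
        rw [this]
        ring

lemma IsUniformSphere.ae_norm_eq {n : ℕ} {r : ℝ} {ν : Measure (EuclideanSpace ℝ (Fin n))}
    (h : IsUniformSphere n r ν) : ∀ᵐ s ∂ν, ‖s‖ = r := by
  rw [ae_iff]
  convert h.2.1 using 2
  ext s
  simp

lemma IsUniformSphere.integral_cond_inner_nonneg {n : ℕ} {ν : Measure (EuclideanSpace ℝ (Fin n))}
    (h : IsUniformSphere n 1 ν) {u v : EuclideanSpace ℝ (Fin n)}
    (hu : ‖u‖ = 1) (huv : ⟪u, v⟫ = 0) (f : BoundedContinuousFunction (ℝ × ℝ) ℝ) (c : ℝ) :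
    ∫ s, f (c * ⟪s, u⟫, c * ⟪s, v⟫) ∂(ν[|{x | 0 ≤ ⟪x, u⟫}]) =
      ∫ s, f (c * |⟪s, u⟫|, c * ⟪s, v⟫) ∂ν := by
  have := h.1
  have h0 := ae_inner_ne_zero h.2.2 h.ae_norm_eq hu
  set S := {x : EuclideanSpace ℝ (Fin n) | 0 ≤ ⟪x, u⟫}
  have hS : MeasurableSet S := measurableSet_le (by fun_prop) (by fun_prop)
  set T := Submodule.reflection (ℝ ∙ u)ᗮ
  have hTu : T u = -u := Submodule.reflection_orthogonalComplement_singleton_eq_neg u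
  have hTv : T v = v := Submodule.reflection_mem_subspace_eq_self
    (Submodule.mem_orthogonal_singleton_iff_inner_right.2 huv)
  have hu' (s : EuclideanSpace ℝ (Fin n)) : ⟪T s, u⟫ = -⟪s, u⟫ := by
    rw [← T.inner_map_map s u, hTu, inner_neg_right, neg_neg]
  have hv' (s : EuclideanSpace ℝ (Fin n)) : ⟪T s, v⟫ = ⟪s, v⟫ := by
    rw [← T.inner_map_map s v, hTv]
  have hone := setIntegral_inner_nonneg h0 (h.2.2 T) hTu (integrable_const 1) fun _ => rfl
  have hf := setIntegral_inner_nonneg h0 (h.2.2 T) hTu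
    (F := fun s => f (c * |⟪s, u⟫|, c * ⟪s, v⟫))
    (Integrable.of_bound (C := ‖f‖) (by fun_prop) (ae_of_all _ fun s => f.norm_coe_le_norm _))
    fun s => by simp [hu', hv']
  have hνS : ν.real S = 1 / 2 := by
    simp only [integral_const, smul_eq_mul, mul_one, measureReal_restrict_apply_univ,
      probReal_univ] at hone
    linarith
  rw [ProbabilityTheory.cond, integral_smul_measure, ENNReal.toReal_inv, ← measureReal_def, hνS,
    ← hf]
  norm_num
  refine setIntegral_congr_fun hS fun s hs => ?_
  simp only [abs_of_nonneg (show 0 ≤ ⟪s, u⟫ from hs)]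

/-- If for each `n ≥ 2`, `u n` and `v n` are orthonormal vectors in `ℝⁿ` and `s_n` is
uniformly distributed on the hemisphere `{s ∈ S^{n-1} : ⟨s, u n⟩ ≥ 0}`, then the pair
`(√n ⟨s_n, u n⟩, √n ⟨s_n, v n⟩)` converges in distribution to `(|N₁|, N₂)` with `N₁, N₂`
independent standard normals: expectations of bounded continuous functions converge. -/
theorem stmt12 (u v : (n : ℕ) → EuclideanSpace ℝ (Fin n))
    (hu : ∀ n, 2 ≤ n → ‖u n‖ = 1) (hv : ∀ n, 2 ≤ n → ‖v n‖ = 1)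
    (huv : ∀ n, 2 ≤ n → ⟪u n, v n⟫ = 0)
    (μ : (n : ℕ) → Measure (EuclideanSpace ℝ (Fin n)))
    (hμ : ∀ n, 2 ≤ n → IsUniformHemisphere n 1 (u n) (μ n)) :
    ∀ f : BoundedContinuousFunction (ℝ × ℝ) ℝ,
      Tendsto
        (fun n : ℕ => ∫ s, f (Real.sqrt n * ⟪s, u n⟫, Real.sqrt n * ⟪s, v n⟫) ∂(μ n))
        atTop
        (𝓝 (∫ p, f p ∂(((gaussianReal 0 1).map (fun x : ℝ => |x|)).prod
          (gaussianReal 0 1)))) := by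
  intro f
  rw [← tendsto_add_atTop_iff_nat 2]
  choose ν hν hμν using fun n => hμ (n + 2) (Nat.le_add_left 2 n)
  have hprob (n : ℕ) : IsProbabilityMeasure (ν n) := (hν n).1
  let W (n : ℕ) (s : EuclideanSpace ℝ (Fin (n + 2))) : ℝ × ℝ :=
    (√(n + 2 : ℕ) * ⟪s, u (n + 2)⟫, √(n + 2 : ℕ) * ⟪s, v (n + 2)⟫)
  have hW (n : ℕ) : Measurable (W n) := by fun_prop
  let P (n : ℕ) : ProbabilityMeasure (ℝ × ℝ) :=
    ⟨(ν n).map (W n), Measure.isProbabilityMeasure_map (hW n).aemeasurable⟩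
  let Q : ProbabilityMeasure (ℝ × ℝ) := ⟨(gaussianReal 0 1).prod (gaussianReal 0 1), inferInstance⟩
  have hlim : Tendsto P atTop (𝓝 Q) := by
    rw [tendsto_iff_forall_lipschitz_integral_tendsto]
    rintro g ⟨M, hM⟩ ⟨L, hL⟩
    have hrate : Tendsto (fun n : ℕ => L * ((Var[fun x => x ^ 2; gaussianReal 0 1] + 1) /
        √(n + 2 : ℕ))) atTop (𝓝 0) := by
      rw [← mul_zero (L : ℝ)]
      refine Tendsto.const_mul _ (Tendsto.const_div_atTop ?_ _)
      exact Real.tendsto_sqrt_atTop.comp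
        (tendsto_natCast_atTop_atTop.comp (tendsto_add_atTop_nat 2))
    rw [tendsto_iff_norm_sub_tendsto_zero]
    refine squeeze_zero (fun _ => norm_nonneg _) (fun n => ?_) hrate
    have hmap : ∫ p, g p ∂(P n : Measure (ℝ × ℝ)) = ∫ s, g (W n s) ∂(ν n) :=
      integral_map (hW n).aemeasurable hL.continuous.aestronglyMeasurable
    rw [hmap]
    have hn : 2 ≤ n + 2 := Nat.le_add_left 2 n
    exact abs_integral_sphere_sub_integral_gaussian_le (by lia) (hν n).2.2 (hν n).ae_norm_eq
      (hu _ hn) (hv _ hn) (huv _ hn) hM hL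
  let A : C(ℝ × ℝ, ℝ × ℝ) := ⟨Prod.map (fun x : ℝ => |x|) id, by fun_prop⟩
  have hA := ProbabilityMeasure.tendsto_iff_forall_integral_tendsto.1 hlim (f.compContinuous A)
  have htarget : ∫ p, f p ∂(((gaussianReal 0 1).map (fun x : ℝ => |x|)).prod (gaussianReal 0 1)) =
      ∫ p, f.compContinuous A p ∂(Q : Measure (ℝ × ℝ)) := by
    conv_lhs => rw [← Measure.map_id (μ := gaussianReal 0 1),
      Measure.map_map (by fun_prop) (by fun_prop)]
    rw [Measure.map_prod_map _ _ (by fun_prop) (by fun_prop),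
      integral_map (by fun_prop) (by fun_prop)]
    rfl
  rw [htarget]
  refine hA.congr fun n => ?_
  have hn : 2 ≤ n + 2 := Nat.le_add_left 2 n
  rw [hμν n, (hν n).integral_cond_inner_nonneg (hu _ hn) (huv _ hn)]
  refine (integral_map (hW n).aemeasurable (by fun_prop)).trans ?_
  simp [W, A, abs_mul, abs_of_nonneg (Real.sqrt_nonneg _)]
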